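/- Let G be a simple graph on n vertices with n ≥ 3m² + 4m, and let c be an edge coloring of G such that the total color degree of G is at least 2mn. Then G contains a rainbow matching of size m under c. -/

import Mathlib

variable {V : Type*} {α : Type*}

/-- `M` is a rainbow matching in `G` under the edge coloring `c`: its elements are
edges of `G`, pairwise vertex-disjoint, and receive pairwise distinct colors. -/
def IsRainbowMatching (G : SimpleGraph V) (c : Sym2 V → α) (M : Finset (Sym2 V)) : Prop :=
  ↑M ⊆ G.edgeSet ∧
  (∀ e ∈ M, ∀ f ∈ M, e ≠ f → ∀ v : V, v ∈ e → v ∉ f) ∧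
  ∀ e ∈ M, ∀ f ∈ M, c e = c f → e = f

/-- The color degree of `v`: the number of distinct colors appearing on edges incident to `v`. -/
noncomputable def colorDegree (G : SimpleGraph V) (c : Sym2 V → α) (v : V) : ℕ :=
  (c '' G.incidenceSet v).ncard

/-- The total color degree of `G`: the sum of color degrees over all vertices. -/
noncomputable def totalColorDegree [Fintype V] (G : SimpleGraph V) (c : Sym2 V → α) : ℕ :=
  ∑ v : V, colorDegree G c v


open Classical in
/-- The finset of colors at a vertex. -/
noncomputable def colSet [Fintype V] (G : SimpleGraph V) (c : Sym2 V → α) (v : V) : Finset α :=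
  (Finset.univ.filter (fun z => G.Adj v z)).image (fun z => c s(v, z))

lemma mem_colSet [Fintype V] (G : SimpleGraph V) (c : Sym2 V → α) (v : V) (γ : α) :
    γ ∈ colSet G c v ↔ ∃ z, G.Adj v z ∧ c s(v, z) = γ := by
  classical
  simp [colSet]

lemma colorDegree_eq [Fintype V] (G : SimpleGraph V) (c : Sym2 V → α) (v : V) :
    colorDegree G c v = (colSet G c v).card := by
  classical
  unfold colorDegree
  rw [← Set.ncard_coe_finset]
  congr 1
  ext γ
  simp only [Set.mem_image, Finset.mem_coe, mem_colSet]
  constructor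
  · rintro ⟨e, ⟨he, hv⟩, rfl⟩
    obtain ⟨z, rfl⟩ := Sym2.mem_iff_exists.1 hv
    exact ⟨z, he, rfl⟩
  · rintro ⟨z, hz, rfl⟩
    exact ⟨s(v, z), ⟨hz, Sym2.mem_mk_left _ _⟩, rfl⟩

lemma IsRainbowMatching.subset {G : SimpleGraph V} {c : Sym2 V → α} {M N : Finset (Sym2 V)}
    (hM : IsRainbowMatching G c M) (h : N ⊆ M) : IsRainbowMatching G c N :=
  ⟨fun _ he => hM.1 (h he), fun e he f hf => hM.2.1 e (h he) f (h hf),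
    fun e he f hf => hM.2.2 e (h he) f (h hf)⟩

lemma IsRainbowMatching.insert [DecidableEq V] {G : SimpleGraph V} {c : Sym2 V → α}
    {M : Finset (Sym2 V)}
    (hM : IsRainbowMatching G c M) {a b : V} (hab : G.Adj a b)
    (ha : ∀ e ∈ M, a ∉ e) (hb : ∀ e ∈ M, b ∉ e) (hc : ∀ e ∈ M, c e ≠ c s(a, b)) :
    IsRainbowMatching G c (insert s(a, b) M) ∧ (insert s(a, b) M).card = M.card + 1 := by
  refine ⟨⟨?_, ?_, ?_⟩, ?_⟩
  · intro e he
    rcases Finset.mem_insert.1 (Finset.mem_coe.1 he) with rfl | he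
    · exact hab
    · exact hM.1 he
  · intro e he f hf hef v hv hv'
    rcases Finset.mem_insert.1 he with rfl | he1 <;> rcases Finset.mem_insert.1 hf with rfl | hf1
    · exact hef rfl
    · rcases Sym2.mem_iff.1 hv with rfl | rfl
      · exact ha _ hf1 hv'
      · exact hb _ hf1 hv'
    · rcases Sym2.mem_iff.1 hv' with rfl | rfl
      · exact ha _ he1 hv
      · exact hb _ he1 hv
    · exact hM.2.1 e he1 f hf1 hef v hv hv'
  · intro e he f hf hef
    rcases Finset.mem_insert.1 he with rfl | he <;> rcases Finset.mem_insert.1 hf with rfl | hf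
    · rfl
    · exact absurd hef.symm (hc _ hf)
    · exact absurd hef (hc _ he)
    · exact hM.2.2 e he f hf hef
  · apply Finset.card_insert_of_notMem
    intro h
    exact hc _ h rfl

open Classical in
/-- Vertices covered by a set of edges. -/
noncomputable def cov (M : Finset (Sym2 V)) : Finset V := M.biUnion (fun e => e.toFinset)

lemma mem_cov (M : Finset (Sym2 V)) (v : V) : v ∈ cov M ↔ ∃ e ∈ M, v ∈ e := by
  classical
  simp [cov]

lemma card_cov (M : Finset (Sym2 V)) : (cov M).card ≤ 2 * M.card := by
  classical
  rw [mul_comm]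
  apply Finset.card_biUnion_le_card_mul
  intro e _
  rw [Sym2.card_toFinset]
  split_ifs <;> omega

/-- A vertex of high color degree missed by `M` lets us extend `M`. -/
lemma extend_high [Fintype V] {G : SimpleGraph V} {c : Sym2 V → α} {M : Finset (Sym2 V)}
    (hM : IsRainbowMatching G c M) (v : V) (hv : v ∉ cov M)
    (hd : 3 * M.card < (colSet G c v).card) :
    ∃ N : Finset (Sym2 V), IsRainbowMatching G c N ∧ N.card = M.card + 1 := by
  classical
  have h1 : ((M.image c) ∪ ((cov M).image (fun z => c s(v, z)))).card < (colSet G c v).card := by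
    refine lt_of_le_of_lt (Finset.card_union_le _ _) ?_
    have := Finset.card_image_le (s := M) (f := c)
    have := Finset.card_image_le (s := cov M) (f := fun z => c s(v, z))
    have := card_cov M
    omega
  obtain ⟨γ, hγ, hn⟩ := Finset.exists_mem_notMem_of_card_lt_card h1
  obtain ⟨z, hz, rfl⟩ := (mem_colSet _ _ _ _).1 hγ
  simp only [Finset.mem_union, Finset.mem_image, not_or, not_exists, not_and] at hn
  simp only [mem_cov, not_exists, not_and] at hv
  refine ⟨_, hM.insert hz hv ?_ hn.1⟩
  intro e he hze
  exact hn.2 z ((mem_cov _ _).2 ⟨e, he, hze⟩) rfl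

/-- The local configuration at a bad vertex. -/
lemma bad_config [Fintype V] {G : SimpleGraph V} {c : Sym2 V → α} {M : Finset (Sym2 V)}
    (hM : IsRainbowMatching G c M)
    (hmax : ∀ N : Finset (Sym2 V), IsRainbowMatching G c N → N.card ≤ M.card)
    (w : V) (hw : w ∉ cov M) (hd : 2 * M.card < (colSet G c w).card) :
    ∃ e ∈ M, c e ∈ colSet G c w ∧ (∀ x ∈ e, G.Adj w x ∧ ∀ f ∈ M, c f ≠ c s(w, x)) ∧
      ∀ x ∈ e, ∀ y ∈ e, x ≠ y → c s(w, x) ≠ c s(w, y) := by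
  classical
  by_contra hcon
  push Not at hcon
  let F : Sym2 V → Finset α := fun e => (colSet G c w).filter
    (fun γ => γ = c e ∨ ((∀ f ∈ M, c f ≠ γ) ∧ ∃ x ∈ e, G.Adj w x ∧ c s(w, x) = γ))
  have hcover : colSet G c w ⊆ M.biUnion F := by
    intro γ hγ
    rw [Finset.mem_biUnion]
    by_cases h : ∃ e ∈ M, c e = γ
    · obtain ⟨e, he, h⟩ := h
      exact ⟨e, he, Finset.mem_filter.2 ⟨hγ, Or.inl h.symm⟩⟩
    · push Not at h
      obtain ⟨z, hz, rfl⟩ := (mem_colSet _ _ _ _).1 hγ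
      by_cases hzc : z ∈ cov M
      · obtain ⟨e, he, hze⟩ := (mem_cov _ _).1 hzc
        exact ⟨e, he, Finset.mem_filter.2 ⟨hγ, Or.inr ⟨h, z, hze, hz, rfl⟩⟩⟩
      · exfalso
        simp only [mem_cov, not_exists, not_and] at hw hzc
        obtain ⟨h1, h2⟩ := hM.insert hz hw hzc h
        have := hmax _ h1
        omega
  have hle : (M.biUnion F).card ≤ M.card * 2 := by
    apply Finset.card_biUnion_le_card_mul
    intro e he
    by_contra hgt
    have hgt : 2 < (F e).card := by omega
    obtain ⟨x, y⟩ := e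
    change s(x, y) ∈ M at he
    change 2 < (F s(x, y)).card at hgt
    have hsub : ∀ p q : α, ¬ (F s(x, y) ⊆ {p, q}) := by
      intro p q h
      have := Finset.card_le_card h
      have := Finset.card_le_two (a := p) (b := q)
      omega
    have hF : ∀ γ ∈ F s(x, y), γ = c s(x, y) ∨ γ = c s(w, x) ∨ γ = c s(w, y) := by
      intro γ hγ
      obtain ⟨-, h | ⟨-, z, hz, -, rfl⟩⟩ := Finset.mem_filter.1 hγ
      · exact Or.inl h
      · rcases Sym2.mem_iff.1 hz with rfl | rfl <;> simp
    have h0 : c s(x, y) ∈ colSet G c w := by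
      by_contra h
      apply hsub (c s(w, x)) (c s(w, y))
      intro γ hγ
      have h3 := (Finset.mem_filter.1 hγ).1
      rcases hF γ hγ with rfl | rfl | rfl
      · exact absurd h3 h
      · simp
      · simp
    have hxy : c s(w, x) ≠ c s(w, y) := by
      intro h
      apply hsub (c s(x, y)) (c s(w, y))
      intro γ hγ
      rcases hF γ hγ with rfl | rfl | rfl <;> simp [h]
    have key : ∀ u ∈ s(x, y), G.Adj w u ∧ ∀ f ∈ M, c f ≠ c s(w, u) := by
      by_contra hno
      push Not at hno
      obtain ⟨u, hu, hno⟩ := hno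
      obtain ⟨u', huu⟩ := Sym2.mem_iff_exists.1 hu
      apply hsub (c s(x, y)) (c s(w, u'))
      intro γ hγ
      obtain ⟨-, h | ⟨h1, z, hz, hadj, rfl⟩⟩ := Finset.mem_filter.1 hγ
      · simp [h]
      · rw [huu] at hz
        rcases Sym2.mem_iff.1 hz with rfl | rfl
        · obtain ⟨f, hf, hf'⟩ := hno hadj
          exact absurd hf' (h1 f hf)
        · simp
    obtain ⟨p, hp, q, hq, hpq, heq⟩ := hcon _ he h0 key
    rcases Sym2.mem_iff.1 hp with rfl | rfl <;> rcases Sym2.mem_iff.1 hq with rfl | rfl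
    · exact hpq rfl
    · exact hxy heq
    · exact hxy heq.symm
    · exact hpq rfl
  have := Finset.card_le_card hcover
  omega

/-- Few bad vertices. -/
lemma few_bad [Fintype V] {G : SimpleGraph V} {c : Sym2 V → α} {M : Finset (Sym2 V)}
    (hM : IsRainbowMatching G c M)
    (hmax : ∀ N : Finset (Sym2 V), IsRainbowMatching G c N → N.card ≤ M.card)
    (B : Finset V) (hB : ∀ w ∈ B, w ∉ cov M ∧ 2 * M.card < (colSet G c w).card) :
    B.card ≤ 3 * M.card := by
  classical
  by_contra hlt
  have hcfg := fun w (hw : w ∈ B) => bad_config hM hmax w (hB w hw).1 (hB w hw).2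
  have hne : B.Nonempty := Finset.card_pos.1 (by omega)
  haveI : Nonempty (Sym2 V) := ⟨s(hne.choose, hne.choose)⟩
  choose! E hE hEc hEn hEd using hcfg
  obtain ⟨e, he, hfib⟩ := Finset.exists_lt_card_fiber_of_mul_lt_card_of_maps_to
    (s := B) (t := M) (f := E) (n := 3) (fun w hw => hE w hw) (by omega)
  set T := B.filter (fun w => E w = e) with hT
  have hTcov : ∀ w ∈ T, ∀ f ∈ M, w ∉ f := by
    intro w hw f hf hwf
    exact (hB w (Finset.mem_filter.1 hw).1).1 ((mem_cov _ _).2 ⟨f, hf, hwf⟩)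
  have hTc : ∀ w ∈ T, c e ∈ colSet G c w := by
    intro w hw
    have := hEc w (Finset.mem_filter.1 hw).1
    rwa [(Finset.mem_filter.1 hw).2] at this
  have hTn : ∀ w ∈ T, ∀ x ∈ e, G.Adj w x ∧ ∀ f ∈ M, c f ≠ c s(w, x) := by
    intro w hw
    have := hEn w (Finset.mem_filter.1 hw).1
    rwa [(Finset.mem_filter.1 hw).2] at this
  have hTd : ∀ w ∈ T, ∀ x ∈ e, ∀ y ∈ e, x ≠ y → c s(w, x) ≠ c s(w, y) := by
    intro w hw
    have := hEd w (Finset.mem_filter.1 hw).1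
    rwa [(Finset.mem_filter.1 hw).2] at this
  clear_value T
  obtain ⟨x, y⟩ := e
  change s(x, y) ∈ M at he
  change ∀ w ∈ T, c s(x, y) ∈ colSet G c w at hTc
  change ∀ w ∈ T, ∀ u ∈ s(x, y), G.Adj w u ∧ ∀ f ∈ M, c f ≠ c s(w, u) at hTn
  change ∀ w ∈ T, ∀ u ∈ s(x, y), ∀ v ∈ s(x, y), u ≠ v → c s(w, u) ≠ c s(w, v) at hTd
  have hxy : x ≠ y := (hM.1 he : G.Adj x y).ne
  have hx : x ∈ s(x, y) := Sym2.mem_mk_left _ _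
  have hy : y ∈ s(x, y) := Sym2.mem_mk_right _ _
  obtain ⟨w, hw⟩ : T.Nonempty := Finset.card_pos.1 (by omega)
  obtain ⟨z, hwz, hcz⟩ := (mem_colSet _ _ _ _).1 (hTc w hw)
  have hcard1 : (M.erase s(x, y)).card + 1 = M.card := Finset.card_erase_add_one he
  by_cases hz : z ∈ cov M
  · obtain ⟨e', he', hze'⟩ := (mem_cov _ _).1 hz
    have hee' : e' ≠ s(x, y) := by
      rintro rfl
      exact (hTn w hw z hze').2 _ he hcz.symm
    have h3 : 2 < (T.erase w).card := by
      rw [Finset.card_erase_of_mem hw]; omega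
    obtain ⟨w1, w2, w3, h1, h2, h3, h12, h13, h23⟩ := Finset.two_lt_card_iff.1 h3
    have hpair : ∃ p ∈ T.erase w, ∃ q ∈ T.erase w, p ≠ q ∧ c s(p, x) ≠ c s(q, y) := by
      by_contra hno
      push Not at hno
      have a1 := hno _ h1 _ h2 h12
      have a3 := hno _ h1 _ h3 h13
      have a5 := hno _ h2 _ h3 h23
      have a6 := hno _ h3 _ h2 h23.symm
      have := hTd w2 (Finset.mem_of_mem_erase h2) x hx y hy hxy
      have := hTd w3 (Finset.mem_of_mem_erase h3) x hx y hy hxy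
      exact this (by rw [a6, ← a1, a3])
    obtain ⟨p, hp, q, hq, hpq, hcpq⟩ := hpair
    obtain ⟨hpw, hp⟩ := Finset.mem_erase.1 hp
    obtain ⟨hqw, hq⟩ := Finset.mem_erase.1 hq
    have hcard2 : ((M.erase s(x, y)).erase e').card + 1 = (M.erase s(x, y)).card :=
      Finset.card_erase_add_one (Finset.mem_erase.2 ⟨hee', he'⟩)
    have hM0 : IsRainbowMatching G c ((M.erase s(x, y)).erase e') :=
      hM.subset ((Finset.erase_subset _ _).trans (Finset.erase_subset _ _))
    have hmem : ∀ f ∈ (M.erase s(x, y)).erase e', f ∈ M ∧ f ≠ s(x, y) ∧ f ≠ e' := by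
      intro f hf
      simp only [Finset.mem_erase] at hf
      tauto
    have hxe' : ∀ f ∈ M, f ≠ s(x, y) → x ∉ f ∧ y ∉ f := fun f hf hne =>
      ⟨hM.2.1 _ he f hf hne.symm x hx, hM.2.1 _ he f hf hne.symm y hy⟩
    have hzx : z ≠ x := by rintro rfl; exact (hxe' e' he' hee').1 hze'
    have hzy : z ≠ y := by rintro rfl; exact (hxe' e' he' hee').2 hze'
    have hout : ∀ u ∈ T, u ≠ x ∧ u ≠ y ∧ u ≠ z := by
      intro u hu
      refine ⟨?_, ?_, ?_⟩
      · rintro rfl; exact hTcov _ hu _ he hx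
      · rintro rfl; exact hTcov _ hu _ he hy
      · rintro rfl; exact hTcov _ hu _ he' hze'
    obtain ⟨hM1, hk1⟩ := hM0.insert hwz
      (fun f hf => hTcov w hw f (hmem f hf).1)
      (fun f hf => hM.2.1 e' he' f (hmem f hf).1 (hmem f hf).2.2.symm z hze')
      (fun f hf h => (hmem f hf).2.1 (hM.2.2 f (hmem f hf).1 _ he (h.trans hcz)))
    obtain ⟨hM2, hk2⟩ := hM1.insert (hTn p hp x hx).1
      (by
        intro f hf
        rcases Finset.mem_insert.1 hf with rfl | hf
        · simp [hpw, (hout p hp).2.2]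
        · exact hTcov p hp f (hmem f hf).1)
      (by
        intro f hf
        rcases Finset.mem_insert.1 hf with rfl | hf
        · simp [hzx.symm, (hout w hw).1.symm]
        · exact (hxe' f (hmem f hf).1 (hmem f hf).2.1).1)
      (by
        intro f hf
        rcases Finset.mem_insert.1 hf with rfl | hf
        · rw [hcz]; exact (hTn p hp x hx).2 _ he
        · exact (hTn p hp x hx).2 _ (hmem f hf).1)
    obtain ⟨hM3, hk3⟩ := hM2.insert (hTn q hq y hy).1
      (by
        intro f hf
        rcases Finset.mem_insert.1 hf with rfl | hf
        · simp [hpq.symm, (hout q hq).1]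
        rcases Finset.mem_insert.1 hf with rfl | hf
        · simp [hqw, (hout q hq).2.2]
        · exact hTcov q hq f (hmem f hf).1)
      (by
        intro f hf
        rcases Finset.mem_insert.1 hf with rfl | hf
        · simp [hxy.symm, (hout p hp).2.1.symm]
        rcases Finset.mem_insert.1 hf with rfl | hf
        · simp [hzy.symm, (hout w hw).2.1.symm]
        · exact (hxe' f (hmem f hf).1 (hmem f hf).2.1).2)
      (by
        intro f hf
        rcases Finset.mem_insert.1 hf with rfl | hf
        · exact hcpq
        rcases Finset.mem_insert.1 hf with rfl | hf
        · rw [hcz]; exact (hTn q hq y hy).2 _ he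
        · exact (hTn q hq y hy).2 _ (hmem f hf).1)
    have := hmax _ hM3
    omega
  · have hzM : ∀ f ∈ M, z ∉ f := fun f hf hzf => hz ((mem_cov _ _).2 ⟨f, hf, hzf⟩)
    obtain ⟨p, hpT, hp⟩ := Finset.exists_mem_notMem_of_card_lt_card
      (s := {w, z}) (t := T) (lt_of_le_of_lt Finset.card_le_two (by omega))
    simp only [Finset.mem_insert, Finset.mem_singleton, not_or] at hp
    have hM0 : IsRainbowMatching G c (M.erase s(x, y)) := hM.subset (Finset.erase_subset _ _)
    have hmem : ∀ f ∈ M.erase s(x, y), f ∈ M ∧ f ≠ s(x, y) := by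
      intro f hf
      simp only [Finset.mem_erase] at hf
      tauto
    obtain ⟨hM1, hk1⟩ := hM0.insert hwz
      (fun f hf => hTcov w hw f (hmem f hf).1)
      (fun f hf => hzM f (hmem f hf).1)
      (fun f hf h => (hmem f hf).2 (hM.2.2 f (hmem f hf).1 _ he (h.trans hcz)))
    obtain ⟨hM2, hk2⟩ := hM1.insert (hTn p hpT x hx).1
      (by
        intro f hf
        rcases Finset.mem_insert.1 hf with rfl | hf
        · simp [hp]
        · exact hTcov p hpT f (hmem f hf).1)
      (by
        intro f hf
        rcases Finset.mem_insert.1 hf with rfl | hf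
        · have h1 : x ≠ w := by rintro rfl; exact hTcov _ hw _ he hx
          have h2 : x ≠ z := by rintro rfl; exact hzM _ he hx
          simp [h1, h2]
        · exact hM.2.1 _ he f (hmem f hf).1 (hmem f hf).2.symm x hx)
      (by
        intro f hf
        rcases Finset.mem_insert.1 hf with rfl | hf
        · rw [hcz]; exact (hTn p hpT x hx).2 _ he
        · exact (hTn p hpT x hx).2 _ (hmem f hf).1)
    have := hmax _ hM2
    omega

/-- Induction statement: `S` contains all the vertices of `G` with an edge. -/
lemma rainbow_aux [Fintype V] (c : Sym2 V → α) (m : ℕ) : ∀ (G : SimpleGraph V) (S : Finset V),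
    (∀ a b, G.Adj a b → a ∈ S) → 3 * m ^ 2 + 4 * m ≤ S.card →
    2 * m * S.card ≤ ∑ v ∈ S, (colSet G c v).card →
    ∃ M : Finset (Sym2 V), IsRainbowMatching G c M ∧ M.card = m := by
  classical
  induction m with
  | zero =>
    intro G S _ _ _
    exact ⟨∅, ⟨by simp, by simp, by simp⟩, rfl⟩
  | succ m ih =>
    intro G S hS hn hd
    by_cases hhigh : ∃ v ∈ S, 3 * m < (colSet G c v).card
    · obtain ⟨v, hv, hvd⟩ := hhigh
      let G' : SimpleGraph V :=
        { Adj := fun a b => G.Adj a b ∧ a ≠ v ∧ b ≠ v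
          symm := ⟨fun a b h => ⟨h.1.symm, h.2.2, h.2.1⟩⟩
          loopless := ⟨fun a h => G.loopless.irrefl a h.1⟩ }
      have hG' : ∀ a b, G'.Adj a b ↔ G.Adj a b ∧ a ≠ v ∧ b ≠ v := fun a b => Iff.rfl
      have hcS : (S.erase v).card + 1 = S.card := Finset.card_erase_add_one hv
      have hdv : (colSet G c v).card ≤ (S.erase v).card := by
        refine (Finset.card_le_card ?_).trans
          (Finset.card_image_le (s := S.erase v) (f := fun z => c s(v, z)))
        intro γ hγ
        obtain ⟨z, hz, rfl⟩ := (mem_colSet _ _ _ _).1 hγ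
        exact Finset.mem_image.2 ⟨z, Finset.mem_erase.2 ⟨hz.ne', hS _ _ hz.symm⟩, rfl⟩
      have hdw : ∀ w ∈ S.erase v, (colSet G c w).card ≤ (colSet G' c w).card + 1 := by
        intro w hw
        refine (Finset.card_le_card (t := insert (c s(w, v)) (colSet G' c w)) ?_).trans
          (Finset.card_insert_le _ _)
        intro γ hγ
        obtain ⟨z, hz, rfl⟩ := (mem_colSet _ _ _ _).1 hγ
        by_cases hzv : z = v
        · subst hzv; simp
        · exact Finset.mem_insert_of_mem ((mem_colSet _ _ _ _).2
            ⟨z, ⟨hz, (Finset.mem_erase.1 hw).1, hzv⟩, rfl⟩)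
      have hsum := Finset.sum_le_sum hdw
      rw [Finset.sum_add_distrib, Finset.sum_const, smul_eq_mul, mul_one] at hsum
      have hsplit := Finset.add_sum_erase S (fun w => (colSet G c w).card) hv
      obtain ⟨M, hM, hMc⟩ := ih G' (S.erase v)
        (fun a b h => Finset.mem_erase.2 ⟨h.2.1, hS a b h.1⟩)
        (by nlinarith) (by nlinarith)
      have hMG : IsRainbowMatching G c M := by
        refine ⟨?_, hM.2⟩
        intro e he
        have := hM.1 he
        induction e with
        | _ a b => exact ((hG' a b).1 this).1
      have hvM : v ∉ cov M := by
        intro h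
        obtain ⟨e, he, hve⟩ := (mem_cov _ _).1 h
        obtain ⟨b, rfl⟩ := Sym2.mem_iff_exists.1 hve
        exact ((hG' v b).1 (hM.1 he)).2.1 rfl
      obtain ⟨N, hN, hNc⟩ := extend_high hMG v hvM (by rw [hMc]; exact hvd)
      exact ⟨N, hN, by omega⟩
    · push Not at hhigh
      obtain ⟨M, hMf, hmax⟩ := Finset.exists_max_image
        (Finset.univ.filter (fun M : Finset (Sym2 V) => IsRainbowMatching G c M)) Finset.card
        ⟨∅, Finset.mem_filter.2 ⟨Finset.mem_univ _, by simp, by simp, by simp⟩⟩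
      have hM := (Finset.mem_filter.1 hMf).2
      have hmax : ∀ N, IsRainbowMatching G c N → N.card ≤ M.card := fun N hN =>
        hmax N (Finset.mem_filter.2 ⟨Finset.mem_univ _, hN⟩)
      by_cases hk : m + 1 ≤ M.card
      · obtain ⟨N, hNM, hN⟩ := Finset.exists_subset_card_eq hk
        exact ⟨N, hM.subset hNM, hN⟩
      · exfalso
        let B := S.filter (fun w => w ∉ cov M ∧ 2 * M.card < (colSet G c w).card)
        have hB : B.card ≤ 3 * M.card :=
          few_bad hM hmax B (fun w hw => (Finset.mem_filter.1 hw).2)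
        have hC := card_cov M
        have hbound : ∀ w ∈ S, (colSet G c w).card ≤
            2 * m + (if w ∈ cov M ∪ B then m else 0) := by
          intro w hw
          split_ifs with hif
          · have := hhigh w hw; omega
          · simp only [Finset.mem_union, not_or, B, Finset.mem_filter, not_and, not_lt] at hif
            have := hif.2 hw hif.1
            omega
        have hsum := Finset.sum_le_sum hbound
        rw [Finset.sum_add_distrib, Finset.sum_const, smul_eq_mul, ← Finset.sum_filter,
          Finset.sum_const, smul_eq_mul] at hsum
        have hcard : (S.filter (fun w => w ∈ cov M ∪ B)).card ≤ 5 * m := by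
          have h1 : S.filter (fun w => w ∈ cov M ∪ B) ⊆ cov M ∪ B :=
            fun w hw => (Finset.mem_filter.1 hw).2
          have h2 := Finset.card_le_card h1
          have h3 := Finset.card_union_le (cov M) B
          omega
        have := Nat.mul_le_mul_right m hcard
        nlinarith

/-- If `G` is a graph on `n ≥ 3 * m ^ 2 + 4 * m` vertices and `c` is an edge coloring
with total color degree at least `2 * m * n`, then `G` contains a rainbow matching of
size `m`. -/
theorem general_rainbow_matching [Fintype V] (G : SimpleGraph V)
    (c : Sym2 V → α) (m : ℕ)
    (hn : 3 * m ^ 2 + 4 * m ≤ Fintype.card V)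
    (h : 2 * m * Fintype.card V ≤ totalColorDegree G c) :
    ∃ M : Finset (Sym2 V), IsRainbowMatching G c M ∧ M.card = m := by
  refine rainbow_aux c m G Finset.univ (fun _ _ _ => Finset.mem_univ _) hn ?_
  simpa only [totalColorDegree, colorDegree_eq, Finset.card_univ] using h
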